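/- For every simple graph G (with at least one edge): π̂_3(G) = 1 − 1/(χ(G)−1) if χ(G) ≥ 4; π̂_3(G) = 0 if G is triangle-free, there exists a vertex v of G such that G − v is bipartite, and there exists a bipartite subgraph B of G with bipartition (U₁,U₂) such that E(G) \ E(B) is a (possibly empty) matching whose edges all lie inside one part of B; and π̂_3(G) = 1/2 in all remaining cases. -/

import Mathlib

/-!
Upper bounds for `χ(G) ≤ r + 1`: if the shadow has density above `1 - 1 / r`, it contains a large
blow-up of `G` by the Erdős–Stone theorem. Choosing one vertex in each part at random makes the
hyperedges picked for the edges of `G` avoid the other chosen vertices, hence distinct.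

Lower bounds come from three constructions: complete `r`-partite hypergraphs (colourings of `G`
pull back), complete bipartite graphs with the vertices of one side doubled (a Berge copy forces `G`
to be triangle-free and to split into an independent set and a set inducing a matching), and cones
over complete bipartite graphs (deleting the vertex placed at the apex leaves a bipartite graph).

For degenerate `G`, a random 3-colouring reduces a dense shadow to a dense set `Γ` of pairs `(a, b)`
with third vertices `c (a, b)`, where `a`, `b`, `c` come from disjoint classes. Dependent choice
gives a dense `Γ' ⊆ Γ` and large sets `X`, `Y` completely joined, inside `Γ`, to each other and to
the endpoints of `Γ'`. If for some `w` the pairs of `Γ'` with third vertex `w` contain a large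
matching, `G` embeds with its special vertex at `w` and the neighbours of that vertex in the
matching. Otherwise, for every `w`, these pairs are covered by boundedly many vertices. Passing to a
positive proportion of `Γ'` then makes `c` injective in one coordinate and independent of the
other, which yields a doubled complete bipartite graph.
-/

/-- A hypergraph `H` (given by its finite collection of hyperedges on vertex type `β`)
contains a Berge copy of the graph `G`: there is an injection of the vertices of `G`
and an injection of the edges of `G` into hyperedges of `H` such that each edge of `G`
is contained in its corresponding hyperedge. -/
def HasBergeCopy {α β : Type*} [DecidableEq β] (G : SimpleGraph α)
    (H : Finset (Finset β)) : Prop :=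
  ∃ (i : α → β) (f : Sym2 α → Finset β),
    Function.Injective i ∧ Set.InjOn f G.edgeSet ∧
    (∀ e ∈ G.edgeSet, f e ∈ H) ∧
    (∀ u v, G.Adj u v → i u ∈ f s(u, v) ∧ i v ∈ f s(u, v))

/-- The edge set of the shadow graph of a hypergraph `H`: all 2-element subsets of
vertices covered by some hyperedge of `H`. -/
def covPairs {β : Type*} [DecidableEq β] (H : Finset (Finset β)) : Finset (Finset β) :=
  H.biUnion fun h => Finset.powersetCard 2 h

/-- The `R`-cover Turán number `êx_R(n, G)`: the maximum number of edges in the shadow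
of a Berge-`G`-free `R`-graph on `n` vertices. -/
noncomputable def coverTuranNumber {α : Type*} (R : Set ℕ) (n : ℕ)
    (G : SimpleGraph α) : ℕ :=
  sSup { m | ∃ H : Finset (Finset (Fin n)),
    (∀ h ∈ H, h.card ∈ R) ∧ ¬ HasBergeCopy G H ∧ m = (covPairs H).card }

/-- The `k`-cover Turán density `π̂_k(G) = limsup_{n → ∞} êx_k(n, G) / C(n,2)`. -/
noncomputable def coverTuranDensity {α : Type*} (k : ℕ) (G : SimpleGraph α) : ℝ :=
  Filter.limsup
    (fun n : ℕ => (coverTuranNumber {k} n G : ℝ) / (n.choose 2 : ℝ)) Filter.atTop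

/-- The degeneracy condition of Theorem 4 (characterizing `π̂₃(G) = 0`):
`G` is triangle-free, some vertex deletion makes `G` bipartite, and there is a
bipartite subgraph `B ≤ G` such that the remaining edges of `G` form a (possibly
empty) matching inside one of the two parts of `B`. -/
def DegenerateCond {α : Type*} (G : SimpleGraph α) : Prop :=
  (G.CliqueFree 3 ∧ ∃ v : α, (G.induce ({v}ᶜ : Set α)).Colorable 2) ∧
  (∃ (B : SimpleGraph α) (U : Set α), B ≤ G ∧
    (∀ u v : α, B.Adj u v → (u ∈ U ↔ v ∉ U)) ∧
    ∃ S : Set α, (S = U ∨ S = Uᶜ) ∧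
      (∀ e ∈ G.edgeSet \ B.edgeSet, ∀ x : α, x ∈ e → x ∈ S) ∧
      (∀ e ∈ G.edgeSet \ B.edgeSet, ∀ e' ∈ G.edgeSet \ B.edgeSet,
        e ≠ e' → ∀ x : α, x ∈ e → x ∉ e'))

open Finset Filter Function
open scoped SimpleGraph

section Basics

variable {α β γ V : Type*} [DecidableEq β] [DecidableEq γ] {G : SimpleGraph α}

theorem HasBergeCopy.map {H : Finset (Finset β)} {H' : Finset (Finset γ)} (h : HasBergeCopy G H)
    (j : β ↪ γ) (hj : ∀ s ∈ H, s.map j ∈ H') : HasBergeCopy G H' := by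
  obtain ⟨i, f, hi, hf, hfH, hfi⟩ := h
  exact ⟨j ∘ i, fun e ↦ (f e).map j, j.injective.comp hi, (map_injective j).comp_injOn hf,
    fun e he ↦ hj _ (hfH e he), fun u v huv ↦ by simpa using hfi u v huv⟩

-- `D` picks the direction(s) in which an edge is read when its hyperedge `F u v` is assigned.
theorem hasBergeCopy_of_orientation {H : Finset (Finset β)} {i : α → β} (hi : Injective i)
    (D : α → α → Prop) (F : α → α → Finset β) (hD : ∀ u v, G.Adj u v → D u v ∨ D v u)
    (hF : ∀ u v, G.Adj u v → D u v → F u v ∈ H ∧ i u ∈ F u v ∧ i v ∈ F u v)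
    (hinj : ∀ u v u' v', G.Adj u v → D u v → G.Adj u' v' → D u' v' → F u v = F u' v' →
      s(u, v) = s(u', v')) :
    HasBergeCopy G H := by
  have horient (e : Sym2 α) : ∃ p : α × α, s(p.1, p.2) = e ∧ (e ∈ G.edgeSet → D p.1 p.2) := by
    induction e with | _ u v
    by_cases huv : G.Adj u v
    · rcases hD u v huv with h | h
      exacts [⟨(u, v), rfl, fun _ ↦ h⟩, ⟨(v, u), Sym2.eq_swap, fun _ ↦ h⟩]
    · exact ⟨(u, v), rfl, fun h ↦ absurd h huv⟩
  choose p hp hpD using horient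
  have hpG {e : Sym2 α} (he : e ∈ G.edgeSet) : G.Adj (p e).1 (p e).2 := by
    rwa [← G.mem_edgeSet, hp]
  refine ⟨i, fun e ↦ F (p e).1 (p e).2, hi, fun e he e' he' h ↦ ?_,
    fun e he ↦ (hF _ _ (hpG he) (hpD e he)).1, fun u v huv ↦ ?_⟩
  · rw [← hp e, ← hp e']
    exact hinj _ _ _ _ (hpG he) (hpD e he) (hpG he') (hpD e' he') h
  · have hmem := hF _ _ (hpG huv) (hpD s(u, v) huv)
    rcases Sym2.eq_iff.mp (hp s(u, v)) with ⟨hu, hv⟩ | ⟨hv, hu⟩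
    · simpa only [hu, hv] using hmem.2
    · simpa only [hu, hv, and_comm] using hmem.2

/-- The shadow `∂(H)` of a hypergraph, as a simple graph; its edges are the members of
`covPairs H`. -/
def shadowGraph (H : Finset (Finset V)) : SimpleGraph V where
  Adj u v := u ≠ v ∧ ∃ h ∈ H, u ∈ h ∧ v ∈ h
  symm := ⟨fun _ _ ⟨hne, h, hh, hu, hv⟩ ↦ ⟨hne.symm, h, hh, hv, hu⟩⟩
  loopless := ⟨fun _ h ↦ h.1 rfl⟩

theorem card_covPairs [Fintype V] [DecidableEq V] (H : Finset (Finset V))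
    [DecidableRel (shadowGraph H).Adj] : #(covPairs H) = #(shadowGraph H).edgeFinset := by
  have himage : covPairs H = (shadowGraph H).edgeFinset.image Sym2.toFinset := by
    ext p
    simp only [covPairs, mem_biUnion, mem_powersetCard, mem_image, SimpleGraph.mem_edgeFinset]
    constructor
    · rintro ⟨h, hh, hp, hc⟩
      obtain ⟨u, v, huv, rfl⟩ := card_eq_two.mp hc
      exact ⟨s(u, v), ⟨huv, h, hh, hp (by simp), hp (by simp)⟩, Sym2.toFinset_mk_eq⟩
    · rintro ⟨e, he, rfl⟩
      induction e with | _ u v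
      obtain ⟨huv, h, hh, hu, hv⟩ := he
      exact ⟨h, hh, by simp [Sym2.toFinset_mk_eq, insert_subset_iff, hu, hv],
        by rw [Sym2.toFinset_mk_eq, card_pair huv]⟩
  rw [himage, card_image_of_injective]
  exact fun e e' h ↦ Sym2.ext fun x ↦ by rw [← Sym2.mem_toFinset, h, Sym2.mem_toFinset]

end Basics

section CoverTuran

variable {α V : Type*} {G : SimpleGraph α}

theorem coverTuranNumber_le {R : Set ℕ} {n m : ℕ}
    (h : ∀ H : Finset (Finset (Fin n)), (∀ e ∈ H, #e ∈ R) → ¬HasBergeCopy G H →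
      #(covPairs H) ≤ m) : coverTuranNumber R n G ≤ m :=
  csSup_le' fun _ ⟨H, hR, hG, hm⟩ ↦ hm ▸ h H hR hG

theorem card_covPairs_le_choose_two [Fintype V] [DecidableEq V] (H : Finset (Finset V)) :
    #(covPairs H) ≤ (Fintype.card V).choose 2 := by
  classical
  exact card_covPairs H ▸ SimpleGraph.card_edgeFinset_le_card_choose_two

theorem card_edgeFinset_le_coverTuranNumber {W : Type*} [Fintype V] [DecidableEq V] [Fintype W]
    {R : Set ℕ} {H : Finset (Finset V)} (hR : ∀ e ∈ H, #e ∈ R) (hG : ¬HasBergeCopy G H)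
    {K : SimpleGraph W} [DecidableRel K.Adj] (hK : K ⊑ shadowGraph H) :
    #K.edgeFinset ≤ coverTuranNumber R (Fintype.card V) G := by
  classical
  let e : V ≃ Fin (Fintype.card V) := Fintype.equivFin V
  let H' := H.image (·.map e.toEmbedding)
  have hHH' : shadowGraph H ⊑ shadowGraph H' := by
    refine ⟨⟨⟨e, fun {u v} huv ↦ ?_⟩, e.injective⟩⟩
    obtain ⟨hne, h, hh, hu, hv⟩ := huv
    exact ⟨e.injective.ne hne, _, mem_image_of_mem _ hh, by simpa using hu, by simpa using hv⟩
  obtain ⟨φ⟩ := hK.trans hHH'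
  calc #K.edgeFinset ≤ #(shadowGraph H').edgeFinset := by
        simpa only [SimpleGraph.edgeFinset_card] using
          Fintype.card_le_of_embedding φ.mapEdgeSet
    _ = #(covPairs H') := (card_covPairs H').symm
    _ ≤ coverTuranNumber R (Fintype.card V) G := by
      refine le_csSup ⟨(Fintype.card V).choose 2, ?_⟩
        ⟨H', by simpa [H'] using hR, fun h ↦ hG ?_, rfl⟩
      · rintro m ⟨H, -, -, rfl⟩
        simpa using card_covPairs_le_choose_two H
      · refine h.map e.symm.toEmbedding fun s hs ↦ ?_
        obtain ⟨t, ht, rfl⟩ := mem_image.mp hs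
        simpa [Finset.map_map] using ht

theorem le_coverTuranDensity {k : ℕ} {x : ℝ}
    (h : ∃ᶠ n : ℕ in atTop, x * n.choose 2 ≤ coverTuranNumber {k} n G) :
    x ≤ coverTuranDensity k G := by
  refine le_limsup_of_frequently_le ?_ (isBoundedUnder_of ⟨1, fun n ↦ ?_⟩)
  · refine (h.and_eventually (eventually_ge_atTop 2)).mono fun n ⟨hn, hn2⟩ ↦ ?_
    rwa [le_div_iff₀ (mod_cast Nat.choose_pos hn2)]
  · refine div_le_one_of_le₀ (mod_cast coverTuranNumber_le fun H _ _ ↦ ?_) (by positivity)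
    simpa using card_covPairs_le_choose_two H

theorem coverTuranDensity_nonneg (k : ℕ) (G : SimpleGraph α) : 0 ≤ coverTuranDensity k G :=
  le_coverTuranDensity (Frequently.of_forall fun n ↦ by simp)

theorem coverTuranDensity_le {k : ℕ} {x : ℝ} (hx : 0 ≤ x)
    (h : ∀ ε > 0, ∀ᶠ n : ℕ in atTop, ∀ H : Finset (Finset (Fin n)), (∀ e ∈ H, #e = k) →
      (x + ε) * n.choose 2 < #(covPairs H) → HasBergeCopy G H) :
    coverTuranDensity k G ≤ x := by
  refine le_of_forall_pos_le_add fun ε hε ↦ ?_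
  refine limsup_le_of_le (isCoboundedUnder_le_of_le atTop (x := 0) fun n ↦ by positivity) ?_
  filter_upwards [h ε hε] with n hn
  refine div_le_of_le_mul₀ (by positivity) (by positivity) ?_
  rw [← Nat.le_floor_iff (by positivity)]
  refine coverTuranNumber_le fun H hH hG ↦ Nat.le_floor ?_
  exact not_lt.mp fun hlt ↦ hG (hn H (by simpa using hH) hlt)

end CoverTuran

section TuranDensity

open SimpleGraph

variable {W : Type*} {K : SimpleGraph W}

theorem extremalNumber_succ_le {n : ℕ} {d : ℝ} (hd : 0 ≤ d)
    (h : ∀ (Γ : SimpleGraph (Fin (n + 1))) [DecidableRel Γ.Adj], d ≤ Γ.minDegree → K ⊑ Γ) :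
    (extremalNumber (n + 1) K : ℝ) ≤ extremalNumber n K + d := by
  have hbound := extremalNumber_le_iff_of_nonneg (V := Fin (n + 1)) K
    (m := extremalNumber n K + d) (by positivity)
  rw [Fintype.card_fin] at hbound
  refine hbound.mpr fun Γ _ hfree ↦ ?_
  obtain ⟨v, hv⟩ := Γ.exists_minimal_degree_vertex
  have hdeg : (Γ.degree v : ℝ) ≤ d := by
    rw [← hv]
    exact (not_le.mp fun hd ↦ hfree (h Γ hd)).le
  have hdelete : #Γ.edgeFinset - Γ.degree v ≤ extremalNumber n K := by
    simpa [Γ.card_edgeFinset_deleteIncidenceSet v]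
      using card_edgeFinset_deleteIncidenceSet_le_extremalNumber hfree v
  calc (#Γ.edgeFinset : ℝ) ≤ extremalNumber n K + Γ.degree v :=
        mod_cast Nat.sub_le_iff_le_add.mp hdelete
    _ ≤ extremalNumber n K + d := by gcongr

theorem eventually_add_mul_choose_two_le (c q : ℝ) {ε : ℝ} (hε : 0 < ε) :
    ∀ᶠ n : ℕ in atTop, c + q * (n + 1).choose 2 ≤ (q + ε) * n.choose 2 := by
  have hlittle : ∀ᶠ n : ℕ in atTop, 2 * (|c| + |q|) / ε + 1 ≤ n :=
    tendsto_natCast_atTop_atTop.eventually_ge_atTop _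
  filter_upwards [hlittle, eventually_ge_atTop 1] with n hn hn1
  rw [← le_sub_iff_add_le, div_le_iff₀ hε] at hn
  have hn1 : (1 : ℝ) ≤ n := mod_cast hn1
  have hc : c ≤ |c| * n := (le_abs_self c).trans (le_mul_of_one_le_right (abs_nonneg c) hn1)
  have hq : q * n ≤ |q| * n := by gcongr; exact le_abs_self q
  rw [Nat.cast_choose_two, Nat.cast_choose_two, Nat.cast_add_one]
  nlinarith

theorem turanDensity_le_of_minDegree {q : ℝ} (hq : 0 ≤ q)
    (h : ∀ᶠ n : ℕ in atTop, ∀ (Γ : SimpleGraph (Fin n)) [DecidableRel Γ.Adj],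
      q * n ≤ Γ.minDegree → K ⊑ Γ) : turanDensity K ≤ q := by
  obtain ⟨N, hN⟩ := eventually_atTop.mp h
  have hsum (n : ℕ) (hn : N ≤ n) :
      (extremalNumber n K : ℝ) ≤ extremalNumber N K + q * (n + 1).choose 2 := by
    induction n, hn using Nat.le_induction with
    | base => exact le_add_of_nonneg_right (by positivity)
    | succ n hn ih =>
      have hstep := extremalNumber_succ_le (d := q * (n + 1 : ℕ)) (by positivity)
        (hN (n + 1) (by lia))
      rw [Nat.choose_succ_succ' (n + 1), Nat.choose_one_right, Nat.cast_add]
      linarith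
  refine le_of_forall_pos_le_add fun ε hε ↦ le_of_tendsto (tendsto_turanDensity K) ?_
  filter_upwards [eventually_add_mul_choose_two_le (extremalNumber N K) q hε,
    eventually_ge_atTop N] with n hn hNn
  exact div_le_of_le_mul₀ (by positivity) (by positivity) ((hsum n hNn).trans hn)

theorem turanDensity_le_of_colorable [Finite W] {r : ℕ} (hr : 1 ≤ r) (hK : K.Colorable (r + 1)) :
    turanDensity K ≤ 1 - 1 / r := by
  cases nonempty_fintype W
  obtain ⟨C⟩ := hK
  have hr1 : 1 / (r : ℝ) ≤ 1 := div_le_one_of_le₀ (mod_cast hr) (by positivity)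
  refine le_of_forall_pos_le_add fun ε hε ↦ turanDensity_le_of_minDegree (by linarith) ?_
  filter_upwards [eventually_completeEquipartiteGraph_isContained_of_minDegree hε r
    (Fintype.card W)] with n hn Γ _ hΓ
  exact (isContained_completeEquipartiteGraph_of_colorable C _
    fun c ↦ Fintype.card_subtype_le _).trans (hn hΓ)

end TuranDensity

section BlowUp

theorem card_filter_mul_card_le {α C : Type*} [Fintype α] [DecidableEq α] [Fintype C]
    (p : (α → C) → Prop) [DecidablePred p] (x : α) {b : ℕ}
    (h : ∀ ψ, #{c | p (update ψ x c)} ≤ b) :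
    #{ψ | p ψ} * Fintype.card C ≤ Fintype.card (α → C) * b :=
  calc #{ψ | p ψ} * Fintype.card C = #{q : (α → C) × C | p q.1} := by
        rw [← card_univ, ← card_product, ← univ_product_univ, filter_product_left]
    _ = #{q : (α → C) × C | p (update q.1 x q.2)} :=
        -- Exchanging `c` with the value at `x` is an involution on the pairs `(ψ, c)`.
        card_nbij' (fun q ↦ (update q.1 x q.2, q.1 x)) (fun q ↦ (update q.1 x q.2, q.1 x))
          (by simp [Set.MapsTo]) (by simp [Set.MapsTo]) (by simp [Set.LeftInvOn])
          (by simp [Set.RightInvOn, Set.LeftInvOn])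
    _ = ∑ ψ, #{c | p (update ψ x c)} := by simp only [card_filter, Fintype.sum_prod_type]
    _ ≤ Fintype.card (α → C) * b := sum_le_card_nsmul _ _ _ fun ψ _ ↦ h ψ

theorem exists_forall_not_of_card_update_le {α I C : Type*} [Finite α] [DecidableEq α] [Fintype I]
    [Fintype C] (bad : I → (α → C) → Prop) [∀ j, DecidablePred (bad j)] (z : I → α) {b : ℕ}
    (h : ∀ j ψ, #{c | bad j (update ψ (z j) c)} ≤ b)
    (hC : Fintype.card I * b < Fintype.card C) : ∃ ψ : α → C, ∀ j, ¬bad j ψ := by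
  classical
  cases nonempty_fintype α
  by_contra! hbad
  have : Nonempty C := Fintype.card_pos_iff.mp (by lia)
  have hcover : (univ : Finset (α → C)) ⊆ univ.biUnion fun j ↦ {ψ | bad j ψ} := fun ψ _ ↦ by
    simpa using hbad ψ
  have hcount : Fintype.card (α → C) * Fintype.card C ≤
      Fintype.card (α → C) * (Fintype.card I * b) :=
    calc Fintype.card (α → C) * Fintype.card C
        ≤ (∑ j, #{ψ | bad j ψ}) * Fintype.card C := by
          gcongr
          exact (card_le_card hcover).trans card_biUnion_le
      _ ≤ ∑ _j : I, Fintype.card (α → C) * b := by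
          rw [sum_mul]
          exact sum_le_sum fun j _ ↦ card_filter_mul_card_le (bad j) (z j) (h j)
      _ = Fintype.card (α → C) * (Fintype.card I * b) := by simp [mul_left_comm]
  exact hC.not_ge (Nat.le_of_mul_le_mul_left hcount Fintype.card_pos)

variable {α V : Type*} {G : SimpleGraph α} {H : Finset (Finset V)}

theorem exists_hyperedge_of_shadowGraph (H : Finset (Finset V)) :
    ∃ g : Sym2 V → Finset V, ∀ u v, (shadowGraph H).Adj u v →
      g s(u, v) ∈ H ∧ u ∈ g s(u, v) ∧ v ∈ g s(u, v) := by
  have hpick (e : Sym2 V) : ∃ h, e ∈ (shadowGraph H).edgeSet → h ∈ H ∧ ∀ x ∈ e, x ∈ h := by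
    induction e with | _ u v
    by_cases huv : (shadowGraph H).Adj u v
    · obtain ⟨-, h, hh, hu, hv⟩ := huv
      exact ⟨h, fun _ ↦ ⟨hh, by simp [hu, hv]⟩⟩
    · exact ⟨∅, fun h ↦ absurd h huv⟩
  choose g hg using hpick
  exact ⟨g, fun u v huv ↦ by simpa using hg s(u, v) huv⟩

theorem hasBergeCopy_of_transversal [DecidableEq V] {i : α → V} (hi : Injective i)
    {g : Sym2 V → Finset V}
    (hg : ∀ u v, G.Adj u v → g s(i u, i v) ∈ H ∧ i u ∈ g s(i u, i v) ∧ i v ∈ g s(i u, i v))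
    (hfree : ∀ u v y, G.Adj u v → y ≠ u → y ≠ v → i y ∉ g s(i u, i v)) : HasBergeCopy G H := by
  refine hasBergeCopy_of_orientation hi (fun _ _ ↦ True) (fun u v ↦ g s(i u, i v))
    (fun _ _ _ ↦ .inl trivial) (fun u v huv _ ↦ hg u v huv) ?_
  intro u v u' v' huv _ huv' _ heq
  have hends (y : α) (hy : i y ∈ g s(i u', i v')) : y = u ∨ y = v := by
    by_contra! hne
    exact hfree u v y huv hne.1 hne.2 (heq ▸ hy)
  obtain ⟨-, hu', hv'⟩ := hg u' v' huv'
  have := huv'.ne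
  rcases hends u' hu' with rfl | rfl <;> rcases hends v' hv' with rfl | rfl <;> simp_all

theorem hasBergeCopy_of_blowUp_isContained [Fintype α] [DecidableEq V] {k T : ℕ}
    (hH : ∀ h ∈ H, #h = k) (hT : Fintype.card (α × α × α) * k < T)
    (hK : G.comap (Prod.fst : α × Fin T → α) ⊑ shadowGraph H) : HasBergeCopy G H := by
  classical
  obtain ⟨φ⟩ := hK
  obtain ⟨g, hg⟩ := exists_hyperedge_of_shadowGraph H
  let i (ψ : α → Fin T) (x : α) : V := φ (x, ψ x)
  have hadj (ψ) {u v} (huv : G.Adj u v) : (shadowGraph H).Adj (i ψ u) (i ψ v) :=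
    φ.toHom.map_adj (show (G.comap Prod.fst).Adj (u, ψ u) (v, ψ v) from huv)
  let bad (j : α × α × α) (ψ : α → Fin T) : Prop :=
    G.Adj j.1 j.2.1 ∧ j.2.2 ≠ j.1 ∧ j.2.2 ≠ j.2.1 ∧ i ψ j.2.2 ∈ g s(i ψ j.1, i ψ j.2.1)
  have hbad (j ψ) : #{c | bad j (update ψ j.2.2 c)} ≤ k := by
    obtain ⟨u, v, y⟩ := j
    by_cases hj : G.Adj u v ∧ y ≠ u ∧ y ≠ v
    · obtain ⟨huv, hyu, hyv⟩ := hj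
      rw [← hH _ (hg _ _ (hadj ψ huv)).1]
      refine card_le_card_of_injOn (fun c ↦ φ (y, c)) (fun c hc ↦ ?_)
        fun c _ c' _ h ↦ (Prod.ext_iff.mp (φ.injective h)).2
      simpa [bad, i, huv, hyu, hyv, hyu.symm, hyv.symm] using hc
    · rw [filter_false_of_mem fun c _ hc ↦ hj ⟨hc.1, hc.2.1, hc.2.2.1⟩]
      simp
  obtain ⟨ψ, hψ⟩ := exists_forall_not_of_card_update_le bad (·.2.2) hbad (by simpa using hT)
  refine hasBergeCopy_of_transversal (fun x y hxy ↦ (Prod.ext_iff.mp (φ.injective hxy)).1)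
    (fun u v huv ↦ hg _ _ (hadj ψ huv)) fun u v y huv hu hv hy ↦ hψ (u, v, y) ⟨huv, hu, hv, hy⟩

theorem coverTuranDensity_le_of_colorable [Finite α] (k : ℕ) {r : ℕ} (hr : 1 ≤ r)
    (hG : G.Colorable (r + 1)) : coverTuranDensity k G ≤ 1 - 1 / r := by
  classical
  cases nonempty_fintype α
  let T := Fintype.card (α × α × α) * k + 1
  let K := G.comap (Prod.fst : α × Fin T → α)
  have hK : K.Colorable (r + 1) := .of_hom ⟨Prod.fst, id⟩ hG
  have hr1 : 1 / (r : ℝ) ≤ 1 := div_le_one_of_le₀ (mod_cast hr) (by positivity)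
  refine coverTuranDensity_le (by linarith) fun ε hε ↦ ?_
  filter_upwards [SimpleGraph.eventually_isContained_of_card_edgeFinset K hε] with n hn H hH hlt
  refine hasBergeCopy_of_blowUp_isContained hH (Nat.lt_succ_self _) (hn ?_)
  rw [← card_covPairs]
  refine le_trans ?_ hlt.le
  gcongr
  exact turanDensity_le_of_colorable hr hK

end BlowUp

section LowerBounds

variable {α : Type*} {G : SimpleGraph α}

/-- The complete `r`-partite `k`-uniform hypergraph with parts of size `m`: the `k`-sets meeting
each part at most once. -/
def partiteHypergraph (k r m : ℕ) : Finset (Finset (Fin r × Fin m)) :=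
  {s ∈ powersetCard k univ | Set.InjOn Prod.fst (s : Set (Fin r × Fin m))}

theorem HasBergeCopy.colorable {V : Type*} [DecidableEq V] {H : Finset (Finset V)} {r : ℕ}
    (h : HasBergeCopy G H) {c : V → Fin r} (hc : ∀ s ∈ H, Set.InjOn c s) : G.Colorable r := by
  obtain ⟨i, f, hi, -, hfH, hfi⟩ := h
  refine ⟨.mk (c ∘ i) fun {u v} huv heq ↦ huv.ne (hi ?_)⟩
  exact hc _ (hfH s(u, v) huv) (hfi u v huv).1 (hfi u v huv).2 heq

theorem completeEquipartiteGraph_le_shadowGraph {k r m : ℕ} (hk : 2 ≤ k) (hkr : k ≤ r) :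
    SimpleGraph.completeEquipartiteGraph r m ≤ shadowGraph (partiteHypergraph k r m) := by
  rintro ⟨a, p⟩ ⟨b, q⟩ hab
  have hab : a ≠ b := by simpa [SimpleGraph.completeEquipartiteGraph_adj] using hab
  obtain ⟨parts, hparts, -, hcard⟩ := exists_subsuperset_card_eq (subset_univ {a, b})
    (card_le_two.trans hk) (by simpa using hkr)
  have hinj : Injective fun c ↦ (c, if c = a then p else q) := fun _ _ h ↦ (Prod.ext_iff.mp h).1
  have hmem : a ∈ parts ∧ b ∈ parts := by simpa [insert_subset_iff] using hparts
  refine ⟨by simp [hab], parts.map ⟨_, hinj⟩, ?_, ?_, ?_⟩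
  · simp only [partiteHypergraph, mem_filter, mem_powersetCard, subset_univ, true_and, card_map,
      hcard, coe_map]
    rintro _ ⟨c, -, rfl⟩ _ ⟨d, -, rfl⟩ (rfl : c = d)
    rfl
  · exact mem_map.mpr ⟨a, hmem.1, by simp⟩
  · exact mem_map.mpr ⟨b, hmem.2, by simp [hab.symm]⟩

theorem le_coverTuranDensity_of_not_colorable {k r : ℕ} (hk : 2 ≤ k) (hkr : k ≤ r)
    (hG : ¬G.Colorable r) : 1 - 1 / r ≤ coverTuranDensity k G := by
  refine le_coverTuranDensity (frequently_atTop.mpr fun m ↦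
    ⟨r * m, Nat.le_mul_of_pos_left m (by lia), ?_⟩)
  have hcover := card_edgeFinset_le_coverTuranNumber (R := {k}) (H := partiteHypergraph k r m)
    (fun s hs ↦ (mem_powersetCard.mp (mem_filter.mp hs).1).2)
    (fun h ↦ hG (h.colorable fun s hs ↦ (mem_filter.mp hs).2))
    (.of_le (completeEquipartiteGraph_le_shadowGraph hk hkr))
  rw [SimpleGraph.card_edgeFinset_completeEquipartiteGraph, Fintype.card_prod, Fintype.card_fin,
    Fintype.card_fin] at hcover
  refine le_trans ?_ (Nat.cast_le.mpr hcover)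
  have hr : (2 : ℝ) ≤ r := mod_cast hk.trans hkr
  have hrm : (1 - 1 / (r : ℝ)) * (r * m) = (r - 1) * m := by field_simp
  rw [Nat.cast_mul, Nat.cast_pow, Nat.cast_choose_two, Nat.cast_choose_two, Nat.cast_mul,
    mul_div_assoc', ← mul_assoc, hrm]
  have : 0 ≤ ((r : ℝ) - 1) * m := mul_nonneg (by linarith) (by positivity)
  linarith

theorem card_mul_card_le_coverTuranNumber {A B V : Type*} [Fintype A] [Fintype B] [Fintype V]
    [DecidableEq V] {R : Set ℕ} {H : Finset (Finset V)} (hR : ∀ e ∈ H, #e ∈ R)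
    (hG : ¬HasBergeCopy G H) (hAB : completeBipartiteGraph A B ⊑ shadowGraph H) :
    Fintype.card A * Fintype.card B ≤ coverTuranNumber R (Fintype.card V) G := by
  classical
  refine le_of_eq_of_le ?_ (card_edgeFinset_le_coverTuranNumber hR hG hAB)
  have hcard := SimpleGraph.encard_edgeSet_completeBipartiteGraph (W₁ := A) (W₂ := B)
  rw [← SimpleGraph.coe_edgeFinset, Set.encard_coe_eq_coe_finsetCard] at hcard
  simpa [eq_comm] using congrArg ENat.toNat hcard

end LowerBounds

section Paired

variable {α A B : Type*} [DecidableEq A] [DecidableEq B] {G : SimpleGraph α}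

/-- The hyperedge of `pairedHypergraph A B` spanned by the pair of `a` and the vertex `b`. -/
def pairedEdge (a : A) (b : B) : Finset ((A × Bool) ⊕ B) :=
  {.inl (a, true), .inl (a, false), .inr b}

@[simp]
theorem inl_mem_pairedEdge {a : A} {b : B} {p : A × Bool} :
    .inl p ∈ pairedEdge a b ↔ p.1 = a := by
  obtain ⟨a', _ | _⟩ := p <;> simp [pairedEdge]

@[simp]
theorem inr_mem_pairedEdge {a : A} {b b' : B} : .inr b' ∈ pairedEdge a b ↔ b' = b := by
  simp [pairedEdge]

theorem pairedEdge_inj {a a' : A} {b b' : B} :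
    pairedEdge a b = pairedEdge a' b' ↔ a = a' ∧ b = b' := by
  refine ⟨fun h ↦ ⟨?_, ?_⟩, fun ⟨ha, hb⟩ ↦ ha ▸ hb ▸ rfl⟩
  · simpa [h] using inl_mem_pairedEdge (a := a) (b := b) (p := (a, true))
  · simpa [h] using inr_mem_pairedEdge (a := a) (b := b) (b' := b)

/-- The `3`-uniform hypergraph obtained from a complete bipartite graph between `A` and `B` by
doubling every vertex of `A`. -/
def pairedHypergraph (A B : Type*) [Fintype A] [Fintype B] [DecidableEq A] [DecidableEq B] :
    Finset (Finset ((A × Bool) ⊕ B)) :=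
  univ.image fun p : A × B ↦ pairedEdge p.1 p.2

/-- `S` is a side of a bipartition of `G` up to a matching inside `S`: every edge meets `S`, and
the edges inside `S` are pairwise disjoint. -/
structure IsMatchingSide (G : SimpleGraph α) (S : Set α) : Prop where
  mem_or_mem : ∀ ⦃u v⦄, G.Adj u v → u ∈ S ∨ v ∈ S
  eq_of_adj : ∀ ⦃u v w⦄, u ∈ S → v ∈ S → w ∈ S → G.Adj u v → G.Adj u w → v = w

theorem degenerateCond_iff :
    DegenerateCond G ↔ (G.CliqueFree 3 ∧ ∃ v : α, (G.induce ({v}ᶜ : Set α)).Colorable 2) ∧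
      ∃ S, IsMatchingSide G S := by
  refine and_congr_right fun _ ↦ ⟨?_, fun ⟨S, hS⟩ ↦ ?_⟩
  · rintro ⟨B, U, -, hB, S, hSU, hmem, hdisj⟩
    have hcross {u v} (huv : B.Adj u v) : u ∈ S ↔ v ∉ S := by
      obtain rfl | rfl := hSU
      exacts [hB u v huv, by simp only [Set.mem_compl_iff, hB u v huv]]
    refine ⟨S, fun u v huv ↦ ?_, fun u v w hu hv hw huv huw ↦ ?_⟩
    · by_cases hBuv : B.Adj u v
      · exact or_iff_not_imp_right.mpr (hcross hBuv).mpr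
      · exact .inl (hmem s(u, v) ⟨huv, hBuv⟩ u (by simp))
    · by_contra hne
      exact hdisj s(u, v) ⟨huv, fun h ↦ (hcross h).mp hu hv⟩ s(u, w)
        ⟨huw, fun h ↦ (hcross h).mp hu hw⟩ (by simp [hne, huw.ne]) u (by simp) (by simp)
  · have hmem {e} (he : e ∈ G.edgeSet \ (G.deleteEdges {e | ∀ x ∈ e, x ∈ S}).edgeSet) :
        ∀ x ∈ e, x ∈ S := by simp_all [SimpleGraph.edgeSet_deleteEdges]
    refine ⟨G.deleteEdges {e | ∀ x ∈ e, x ∈ S}, S, G.deleteEdges_le _, fun u v huv ↦ ?_, S,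
      .inl rfl, fun e he ↦ hmem he, fun e he e' he' hne x hx hx' ↦ hne ?_⟩
    · have := hS.mem_or_mem huv.1
      simp only [SimpleGraph.deleteEdges_adj, Set.mem_ofPred_eq, Sym2.ball] at huv
      tauto
    · obtain ⟨y, rfl⟩ := hx
      obtain ⟨z, rfl⟩ := hx'
      rw [hS.eq_of_adj (hmem he x (by simp)) (hmem he y (by simp)) (hmem he' z (by simp))
        he.1 he'.1]

theorem pairedEdge_mem_pairedHypergraph [Fintype A] [Fintype B] (a : A) (b : B) :
    pairedEdge a b ∈ pairedHypergraph A B :=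
  mem_image.mpr ⟨(a, b), mem_univ _, rfl⟩

theorem isMatchingSide_of_pairedEdge {i : α → (A × Bool) ⊕ B} (hi : Injective i)
    (hpair : ∀ u v, G.Adj u v → ∃ a b, i u ∈ pairedEdge a b ∧ i v ∈ pairedEdge a b) :
    IsMatchingSide G {x | (i x).isLeft} := by
  have hpartner {u v} (hu : (i u).isLeft) (hv : (i v).isLeft) (huv : G.Adj u v) :
      i v = (i u).map (fun p ↦ (p.1, !p.2)) id := by
    obtain ⟨a, b, hua, hva⟩ := hpair u v huv
    obtain ⟨⟨a', s⟩, hu⟩ := Sum.isLeft_iff.mp hu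
    obtain ⟨⟨a'', t⟩, hv⟩ := Sum.isLeft_iff.mp hv
    have hne : i u ≠ i v := hi.ne huv.ne
    cases s <;> cases t <;> simp_all
  refine ⟨fun u v huv ↦ ?_, fun u v w hu hv hw huv huw ↦
    hi ((hpartner hu hv huv).trans (hpartner hu hw huw).symm)⟩
  obtain ⟨a, b, hua, hva⟩ := hpair u v huv
  by_contra! hright
  obtain ⟨b', hu⟩ := Sum.isRight_iff.mp (by simpa using hright.1)
  obtain ⟨b'', hv⟩ := Sum.isRight_iff.mp (by simpa using hright.2)
  exact huv.ne (hi (by simp_all))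

theorem HasBergeCopy.cliqueFree_and_isMatchingSide [Fintype A] [Fintype B]
    (h : HasBergeCopy G (pairedHypergraph A B)) :
    G.CliqueFree 3 ∧ ∃ S, IsMatchingSide G S := by
  obtain ⟨i, f, hi, hf, hfH, hfi⟩ := h
  have hedge {e} (he : e ∈ G.edgeSet) : ∃ a b, f e = pairedEdge a b := by
    obtain ⟨⟨a, b⟩, -, hab⟩ := mem_image.mp (hfH e he)
    exact ⟨a, b, hab.symm⟩
  have hS : IsMatchingSide G {x | (i x).isLeft} := isMatchingSide_of_pairedEdge hi fun u v huv ↦ by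
    obtain ⟨a, b, hab⟩ := hedge (e := s(u, v)) huv
    exact ⟨a, b, hab ▸ hfi u v huv⟩
  -- Two adjacent vertices in `S` form a pair, so their edges to a common neighbour outside `S`
  -- would be assigned the same hyperedge.
  have hno {x y z} (hx : (i x).isLeft) (hy : (i y).isLeft) (hxy : G.Adj x y) (hxz : G.Adj x z)
      (hyz : G.Adj y z) : False := by
    by_cases hz : (i z).isLeft
    · exact hyz.ne (hS.eq_of_adj hx hy hz hxy hxz)
    obtain ⟨p, hx⟩ := Sum.isLeft_iff.mp hx
    obtain ⟨q, hy⟩ := Sum.isLeft_iff.mp hy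
    obtain ⟨b, hz⟩ := Sum.isRight_iff.mp (by simpa using hz)
    obtain ⟨a₁, b₁, h₁⟩ := hedge (e := s(x, z)) hxz
    obtain ⟨a₂, b₂, h₂⟩ := hedge (e := s(y, z)) hyz
    obtain ⟨a₃, b₃, h₃⟩ := hedge (e := s(x, y)) hxy
    have hmem := And.intro (hfi x y hxy) (And.intro (hfi x z hxz) (hfi y z hyz))
    simp only [hx, hy, hz, h₁, h₂, h₃, inl_mem_pairedEdge, inr_mem_pairedEdge] at hmem
    have heq : f s(x, z) = f s(y, z) := by
      rw [h₁, h₂, pairedEdge_inj]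
      grind
    exact hxy.ne (by simpa [hxz.ne] using hf hxz hyz heq)
  refine ⟨fun s hs ↦ ?_, _, hS⟩
  classical
  obtain ⟨x, y, z, hxy, hxz, hyz, -⟩ := SimpleGraph.is3Clique_iff.mp hs
  rcases hS.mem_or_mem hxy with hx | hy
  · rcases hS.mem_or_mem hyz with hy | hz
    exacts [hno hx hy hxy hxz hyz, hno hx hz hxz hxy hyz.symm]
  · rcases hS.mem_or_mem hxz with hx | hz
    exacts [hno hx hy hxy hxz hyz, hno hy hz hyz hxy.symm hxz.symm]

theorem IsMatchingSide.exists_pairing {S : Set α} (hS : IsMatchingSide G S) :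
    ∃ (pair : α → α) (slot : α → Bool),
      (∀ x ∈ S, ∀ y ∈ S, pair x = pair y ↔ x = y ∨ G.Adj x y) ∧
      Injective fun x ↦ (pair x, slot x) := by
  classical
  let r : Setoid α :=
    { r x y := x = y ∨ x ∈ S ∧ y ∈ S ∧ G.Adj x y
      iseqv :=
        { refl x := .inl rfl
          symm := by
            rintro x y (rfl | ⟨hx, hy, hxy⟩)
            exacts [.inl rfl, .inr ⟨hy, hx, hxy.symm⟩]
          trans := by
            rintro x y z (rfl | ⟨hx, hy, hxy⟩) (rfl | ⟨hy', hz, hyz⟩)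
            exacts [.inl rfl, .inr ⟨hy', hz, hyz⟩, .inr ⟨hx, hy, hxy⟩,
              .inl (hS.eq_of_adj hy hx hz hxy.symm hyz)] } }
  let pair (x : α) : α := (Quotient.mk r x).out
  have hpair (x y) : pair x = pair y ↔ x = y ∨ x ∈ S ∧ y ∈ S ∧ G.Adj x y :=
    Quotient.out_inj.trans Quotient.eq
  have hself (x) : pair x = x ∨ pair x ∈ S ∧ x ∈ S ∧ G.Adj (pair x) x :=
    Quotient.mk_out (s := r) x
  refine ⟨pair, fun x ↦ pair x = x, fun x hx y hy ↦ by simp [hpair, hx, hy], fun x y hxy ↦ ?_⟩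
  obtain ⟨heq, hslot⟩ := Prod.ext_iff.mp hxy
  obtain rfl | ⟨hx, hy, hadj⟩ := (hpair x y).mp heq
  · rfl
  · obtain hx' | ⟨hp, -, hpx⟩ := hself x
    · have hy' : pair y = y := by simpa [hx'] using hslot
      exact hx'.symm.trans (heq.trans hy')
    · have hy' : pair x = y := hS.eq_of_adj hx hp hy hpx.symm hadj
      have hx' : pair x = x ↔ pair y = y := by simpa using hslot
      exact (hx'.mpr (heq.symm.trans hy')).symm.trans hy'

theorem hasBergeCopy_pairedHypergraph [Fintype α] [DecidableEq α] (hG : G.CliqueFree 3)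
    {S : Set α} (hS : IsMatchingSide G S) :
    HasBergeCopy G (pairedHypergraph α (Option α)) := by
  classical
  obtain ⟨pair, slot, hpair, hinj⟩ := hS.exists_pairing
  let i (x : α) : (α × Bool) ⊕ Option α := if x ∈ S then .inl (pair x, slot x) else .inr (some x)
  let cone (y : α) : Option α := if y ∈ S then none else some y
  have hi : Injective i := by
    intro x y hxy
    by_cases hx : x ∈ S <;> by_cases hy : y ∈ S <;> simp only [i, hx, hy, if_true, if_false,
      Sum.inl.injEq, Sum.inr.injEq, Option.some.injEq, reduceCtorEq] at hxy
    exacts [hinj hxy, hxy]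
  refine hasBergeCopy_of_orientation hi (fun u _ ↦ u ∈ S) (fun u v ↦ pairedEdge (pair u) (cone v))
    hS.mem_or_mem (fun u v huv hu ↦ ⟨pairedEdge_mem_pairedHypergraph _ _, by simp [i, hu], ?_⟩)
    fun u v u' v' huv hu huv' hu' heq ↦ ?_
  · by_cases hv : v ∈ S
    · simp [i, hv, (hpair v hv u hu).mpr (.inr huv.symm)]
    · simp [i, cone, hv]
  · obtain ⟨hp, hc⟩ := pairedEdge_inj.mp heq
    have hv : v ∈ S ∧ v' ∈ S ∨ v ∉ S ∧ v = v' := by grind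
    obtain rfl | hadj := (hpair u hu u' hu').mp hp <;> obtain ⟨hv, hv'⟩ | ⟨-, rfl⟩ := hv
    · rw [hS.eq_of_adj hu hv hv' huv huv']
    · rfl
    · rw [hS.eq_of_adj hu hv hu' huv hadj, hS.eq_of_adj hu' hv' hu huv' hadj.symm, Sym2.eq_swap]
    · exact absurd (SimpleGraph.is3Clique_triple_iff.mpr ⟨hadj, huv, huv'⟩) (hG _)

theorem completeBipartiteGraph_le_shadowGraph_pairedHypergraph [Fintype A] [Fintype B] :
    completeBipartiteGraph (A × Bool) B ≤ shadowGraph (pairedHypergraph A B) := by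
  rintro (p | b) (q | b') h
  · simp at h
  · exact ⟨by simp, _, pairedEdge_mem_pairedHypergraph p.1 b', by simp, by simp⟩
  · exact ⟨by simp, _, pairedEdge_mem_pairedHypergraph q.1 b, by simp, by simp⟩
  · simp at h

theorem half_le_coverTuranDensity_of_not_isMatchingSide
    (hG : ¬(G.CliqueFree 3 ∧ ∃ S, IsMatchingSide G S)) : 1 / 2 ≤ coverTuranDensity 3 G := by
  refine le_coverTuranDensity (frequently_atTop.mpr fun m ↦ ⟨4 * m, by lia, ?_⟩)
  have hcover := card_mul_card_le_coverTuranNumber (R := {3})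
    (H := pairedHypergraph (Fin m) (Fin (2 * m)))
    (fun s hs ↦ by obtain ⟨p, -, rfl⟩ := mem_image.mp hs; simp [pairedEdge])
    (fun h ↦ hG h.cliqueFree_and_isMatchingSide)
    (.of_le completeBipartiteGraph_le_shadowGraph_pairedHypergraph)
  have hcard : m * 2 + 2 * m = 4 * m := by ring
  simp only [Fintype.card_prod, Fintype.card_sum, Fintype.card_fin, Fintype.card_bool, hcard]
    at hcover
  refine le_trans ?_ (Nat.cast_le.mpr hcover)
  rw [Nat.cast_choose_two]
  push_cast
  nlinarith [Nat.cast_nonneg (α := ℝ) m]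

end Paired

section Cone

variable {α A B : Type*} [DecidableEq A] [DecidableEq B] [Fintype A] [Fintype B]
  {G : SimpleGraph α}

/-- The `3`-uniform hypergraph obtained from a complete bipartite graph between `A` and `B` by
adding the apex `none` to every edge. -/
def coneHypergraph (A B : Type*) [Fintype A] [Fintype B] [DecidableEq A] [DecidableEq B] :
    Finset (Finset (Option (A ⊕ B))) :=
  univ.image fun p : A × B ↦ {none, some (.inl p.1), some (.inr p.2)}

theorem HasBergeCopy.exists_colorable_two [Nonempty α]
    (h : HasBergeCopy G (coneHypergraph A B)) :
    ∃ v : α, (G.induce ({v}ᶜ : Set α)).Colorable 2 := by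
  obtain ⟨i, f, hi, -, hfH, hfi⟩ := h
  obtain ⟨v, hv⟩ : ∃ v, ∀ x, x ≠ v → i x ≠ none := by
    by_cases hnone : ∃ v, i v = none
    · obtain ⟨v, hv⟩ := hnone
      exact ⟨v, fun x hx hxn ↦ hx (hi (hxn.trans hv.symm))⟩
    · exact ⟨Classical.arbitrary α, fun x _ hx ↦ hnone ⟨x, hx⟩⟩
  let κ : (G.induce ({v}ᶜ : Set α)).Coloring Bool :=
    .mk (fun x ↦ (i x).elim false Sum.isLeft) fun {x y} hxy heq ↦ by
      obtain ⟨p, hp⟩ := Option.ne_none_iff_exists'.mp (hv x x.2)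
      obtain ⟨q, hq⟩ := Option.ne_none_iff_exists'.mp (hv y y.2)
      obtain ⟨⟨a, b⟩, -, hab⟩ := mem_image.mp (hfH s(x.1, y.1) hxy)
      have hpq : p ≠ q := fun h ↦ hxy.ne (Subtype.ext (hi (by rw [hp, hq, h])))
      have hmem := hfi x y hxy
      cases p <;> cases q <;> simp_all [← hab]
  exact ⟨v, κ.colorable⟩

theorem completeBipartiteGraph_isContained_shadowGraph_coneHypergraph [Nonempty A] :
    completeBipartiteGraph (Option A) B ⊑ shadowGraph (coneHypergraph A B) := by
  let φ : Option A ⊕ B → Option (A ⊕ B) := Sum.elim (Option.map .inl) (some ∘ .inr)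
  have hφ : Injective φ := by
    rintro ((_ | a) | b) ((_ | a') | b') h <;> simp_all [φ]
  have hcover (a : Option A) (b : B) : (shadowGraph (coneHypergraph A B)).Adj
      (φ (.inl a)) (φ (.inr b)) := by
    refine ⟨hφ.ne (by simp), _, mem_image_of_mem _ (mem_univ (a.getD (Classical.arbitrary A), b)),
      ?_, by simp [φ]⟩
    cases a <;> simp [φ]
  refine ⟨⟨⟨φ, fun {x y} hxy ↦ ?_⟩, hφ⟩⟩
  rcases x with a | b <;> rcases y with a' | b'
  · simp at hxy
  · exact hcover a b'
  · exact (hcover a' b).symm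
  · simp at hxy

theorem half_le_coverTuranDensity_of_not_colorable_induce [Nonempty α]
    (hG : ¬∃ v : α, (G.induce ({v}ᶜ : Set α)).Colorable 2) : 1 / 2 ≤ coverTuranDensity 3 G := by
  refine le_coverTuranDensity (frequently_atTop.mpr fun m ↦
    ⟨(m + 1) + (m + 1) + 1, by lia, ?_⟩)
  have hcover := card_mul_card_le_coverTuranNumber (R := {3})
    (H := coneHypergraph (Fin (m + 1)) (Fin (m + 1)))
    (fun s hs ↦ by obtain ⟨p, -, rfl⟩ := mem_image.mp hs; simp)
    (fun h ↦ hG h.exists_colorable_two)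
    completeBipartiteGraph_isContained_shadowGraph_coneHypergraph
  simp only [Fintype.card_option, Fintype.card_sum, Fintype.card_fin] at hcover
  refine le_trans ?_ (Nat.cast_le.mpr hcover)
  rw [Nat.cast_choose_two]
  push_cast
  nlinarith [Nat.cast_nonneg (α := ℝ) m]

end Cone

section TripartiteCover

theorem card_le_card_mul_card_filter_comp_eq {α ι C : Type*} [Fintype α] [DecidableEq α]
    [Fintype ι] [DecidableEq ι] [Fintype C] [DecidableEq C] {t : ι → α} (ht : Injective t)
    (g : ι → C) :
    Fintype.card (α → C) ≤ Fintype.card (ι → C) * #{f : α → C | f ∘ t = g} := by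
  rw [← card_univ, ← card_univ, ← card_product]
  refine card_le_card_of_injOn (fun f ↦ (f ∘ t, extend t g f)) (fun f _ ↦ ?_)
    fun f _ f' _ hff' ↦ ?_
  · simpa [funext_iff] using ht.extend_apply g f
  · obtain ⟨hcomp, hext⟩ := Prod.ext_iff.mp hff'
    ext x : 1
    by_cases hx : ∃ i, t i = x
    · obtain ⟨i, rfl⟩ := hx
      exact congrFun hcomp i
    · simpa [extend_apply' _ _ _ hx] using congrFun hext x

theorem exists_card_le_card_mul_card_filter_comp_eq {P α ι C : Type*} [Finite α]
    [Fintype ι] [DecidableEq ι] [Fintype C] [DecidableEq C] [Nonempty C] (s : Finset P)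
    (t : P → ι → α) (ht : ∀ p ∈ s, Injective (t p)) (g : ι → C) :
    ∃ f : α → C, #s ≤ Fintype.card (ι → C) * #{p ∈ s | f ∘ t p = g} := by
  classical
  cases nonempty_fintype α
  have hsum : ∑ _f : α → C, #s ≤
      ∑ f : α → C, Fintype.card (ι → C) * #{p ∈ s | f ∘ t p = g} :=
    calc ∑ _f : α → C, #s = ∑ _p ∈ s, Fintype.card (α → C) := by simp [mul_comm]
      _ ≤ ∑ p ∈ s, Fintype.card (ι → C) * #{f : α → C | f ∘ t p = g} :=
          sum_le_sum fun p hp ↦ card_le_card_mul_card_filter_comp_eq (ht p hp) g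
      _ = ∑ f : α → C, Fintype.card (ι → C) * #{p ∈ s | f ∘ t p = g} := by
          simp only [← mul_sum, card_filter]
          rw [sum_comm]
  obtain ⟨f, -, hf⟩ := exists_le_of_sum_le univ_nonempty hsum
  exact ⟨f, hf⟩

variable {α V : Type*} [DecidableEq V] {G : SimpleGraph α} {H : Finset (Finset V)}
  {c : V × V → V} {Γ Γ' : Finset (V × V)}

/-- A set `Γ` of ordered pairs together with a choice `c p` of a third vertex completing each
`p ∈ Γ` to a hyperedge of `H`, such that the vertices occurring as first entries, as second
entries and as third vertices form three disjoint sets. -/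
structure IsTripartiteCover (H : Finset (Finset V)) (c : V × V → V) (Γ : Finset (V × V)) :
    Prop where
  mem : ∀ ⦃p⦄, p ∈ Γ → {p.1, p.2, c p} ∈ H
  fst_ne_snd : ∀ ⦃p q⦄, p ∈ Γ → q ∈ Γ → p.1 ≠ q.2
  fst_ne_third : ∀ ⦃p q⦄, p ∈ Γ → q ∈ Γ → p.1 ≠ c q
  snd_ne_third : ∀ ⦃p q⦄, p ∈ Γ → q ∈ Γ → p.2 ≠ c q

namespace IsTripartiteCover

theorem mono (h : IsTripartiteCover H c Γ) (hΓ : Γ' ⊆ Γ) : IsTripartiteCover H c Γ' :=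
  ⟨fun _ hp ↦ h.mem (hΓ hp), fun _ _ hp hq ↦ h.fst_ne_snd (hΓ hp) (hΓ hq),
    fun _ _ hp hq ↦ h.fst_ne_third (hΓ hp) (hΓ hq),
    fun _ _ hp hq ↦ h.snd_ne_third (hΓ hp) (hΓ hq)⟩

theorem swap (h : IsTripartiteCover H c Γ) :
    IsTripartiteCover H (c ∘ Prod.swap) (Γ.map (Equiv.prodComm V V).toEmbedding) where
  mem p hp := insert_comm p.2 p.1 _ ▸ h.mem (mem_map_equiv.mp hp)
  fst_ne_snd _ _ hp hq := (h.fst_ne_snd (mem_map_equiv.mp hq) (mem_map_equiv.mp hp)).symm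
  fst_ne_third _ _ hp hq := h.snd_ne_third (mem_map_equiv.mp hp) (mem_map_equiv.mp hq)
  snd_ne_third _ _ hp hq := h.fst_ne_third (mem_map_equiv.mp hp) (mem_map_equiv.mp hq)

theorem injOn (h : IsTripartiteCover H c Γ) :
    Set.InjOn (fun p : V × V ↦ ({p.1, p.2, c p} : Finset V)) Γ := by
  intro p hp q hq hpq
  have hfst : p.1 ∈ ({q.1, q.2, c q} : Finset V) := hpq.subset (by simp)
  have hsnd : p.2 ∈ ({q.1, q.2, c q} : Finset V) := hpq.subset (by simp)
  have := h.fst_ne_snd hp hq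
  have := h.fst_ne_snd hq hp
  have := h.fst_ne_third hp hq
  have := h.snd_ne_third hp hq
  ext1 <;> simp_all [eq_comm]

theorem hasBergeCopy_of_apex (h : IsTripartiteCover H c Γ) {v : α} {κ : α → Bool}
    (hκ : ∀ x y, G.Adj x y → x ≠ v → y ≠ v → κ x ≠ κ y) (a b : α ↪ V) {w : V}
    (ha : ∀ x, a x ∈ Γ.image Prod.fst) (hb : ∀ x, b x ∈ Γ.image Prod.snd) (hw : w ∈ Γ.image c)
    (hapex : ∀ x, G.Adj v x → (a x, b x) ∈ Γ ∧ c (a x, b x) = w)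
    (hab : ∀ x y, G.Adj x y → (a x, b y) ∈ Γ) : HasBergeCopy G H := by
  classical
  simp only [mem_image] at ha hb hw
  obtain ⟨r, hr, rfl⟩ := hw
  have hab_ne (x y) : a x ≠ b y := by
    obtain ⟨p, hp, hpx⟩ := ha x
    obtain ⟨q, hq, hqy⟩ := hb y
    exact hpx ▸ hqy ▸ h.fst_ne_snd hp hq
  have ha_ne (x) : a x ≠ c r := by
    obtain ⟨p, hp, hpx⟩ := ha x
    exact hpx ▸ h.fst_ne_third hp hr
  have hb_ne (x) : b x ≠ c r := by
    obtain ⟨p, hp, hpx⟩ := hb x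
    exact hpx ▸ h.snd_ne_third hp hr
  let i (x : α) : V := if x = v then c r else if κ x then a x else b x
  let pair (x y : α) : V × V := if x = v then (a y, b y) else (a x, b y)
  have hpair {x y} (hxy : G.Adj x y) : pair x y ∈ Γ := by
    by_cases hx : x = v
    · simpa [pair, hx] using (hapex y (hx ▸ hxy)).1
    · simpa [pair, hx] using hab x y hxy
  refine hasBergeCopy_of_orientation (i := i) ?_ (fun x y ↦ x = v ∨ y ≠ v ∧ κ x)
    (fun x y ↦ {(pair x y).1, (pair x y).2, c (pair x y)}) (fun x y hxy ↦ ?_)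
    (fun x y hxy hD ↦ ⟨h.mem (hpair hxy), ?_⟩) fun x y x' y' hxy _ hxy' _ heq ↦ ?_
  · have := a.injective
    have := b.injective
    grind [Injective]
  · grind
  · by_cases hx : x = v
    · subst hx
      have hy : y ≠ x := hxy.ne'
      have := (hapex y hxy).2
      cases hκy : κ y <;> simp [i, pair, hy, hκy, this]
    · grind
  · have := h.injOn (hpair hxy) (hpair hxy') heq
    have := a.injective
    have := b.injective
    grind [Injective]

theorem exists_embedding_of_third_eq_iff {A B : Type*} [Fintype A] [Fintype B] [DecidableEq A]
    [DecidableEq B] [Nonempty B] (h : IsTripartiteCover H c Γ)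
    (hc : ∀ p ∈ Γ, ∀ q ∈ Γ, c p = c q ↔ p.1 = q.1) (a : A ↪ V) (b : B ↪ V)
    (hab : ∀ x y, (a x, b y) ∈ Γ) :
    ∃ j : (A × Bool) ⊕ B ↪ V, ∀ e ∈ pairedHypergraph A B, e.map j ∈ H := by
  obtain ⟨y₀⟩ := ‹Nonempty B›
  let j : (A × Bool) ⊕ B → V :=
    Sum.elim (fun q ↦ if q.2 then a q.1 else c (a q.1, b y₀)) b
  have hj : Injective j := by
    have ha_ne (x y) : a x ≠ b y := h.fst_ne_snd (hab x y) (hab x y)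
    have hac_ne (x x') : a x ≠ c (a x', b y₀) := h.fst_ne_third (hab x y₀) (hab x' y₀)
    have hbc_ne (y x) : b y ≠ c (a x, b y₀) := h.snd_ne_third (hab x y) (hab x y₀)
    rintro (⟨x, _ | _⟩ | y) (⟨x', _ | _⟩ | y') hxy <;>
      simp only [j, Sum.elim_inl, Sum.elim_inr, if_true, Bool.false_eq_true, if_false,
        EmbeddingLike.apply_eq_iff_eq] at hxy <;> grind
  refine ⟨⟨j, hj⟩, fun e he ↦ ?_⟩
  obtain ⟨⟨x, y⟩, -, rfl⟩ := mem_image.mp he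
  have hthird : c (a x, b y₀) = c (a x, b y) := (hc _ (hab x y₀) _ (hab x y)).mpr rfl
  convert h.mem (hab x y) using 1
  simp only [pairedEdge, map_insert, map_singleton, Embedding.coeFn_mk, j, Sum.elim_inl,
    Sum.elim_inr, if_true, Bool.false_eq_true, if_false, hthird]
  rw [pair_comm]

end IsTripartiteCover

theorem exists_third_of_shadowGraph_adj (hH : ∀ e ∈ H, #e = 3) {u v : V}
    (huv : (shadowGraph H).Adj u v) : ∃ w, {u, v, w} ∈ H ∧ u ≠ w ∧ v ≠ w := by
  obtain ⟨hne, e, he, hu, hv⟩ := huv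
  have hv' : v ∈ e.erase u := mem_erase.mpr ⟨hne.symm, hv⟩
  have hcard : #((e.erase u).erase v) = 1 := by
    rw [card_erase_of_mem hv', card_erase_of_mem hu, hH e he]
  obtain ⟨w, hw⟩ := card_eq_one.mp hcard
  have hw' : w ∈ (e.erase u).erase v := hw ▸ mem_singleton_self w
  simp only [mem_erase] at hw'
  refine ⟨w, ?_, hw'.2.1.symm, hw'.1.symm⟩
  rwa [← hw, insert_erase hv', insert_erase hu]

-- A random map `V → Fin 3` colours the three vertices of a given triple by `0, 1, 2` with
-- probability `1 / 27`.
theorem exists_isTripartiteCover [Finite V] (hH : ∀ e ∈ H, #e = 3) :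
    ∃ c Γ, IsTripartiteCover H c Γ ∧ #(covPairs H) ≤ 27 * #Γ := by
  classical
  cases nonempty_fintype V
  have hthird (p : V × V) : ∃ w, (shadowGraph H).Adj p.1 p.2 →
      {p.1, p.2, w} ∈ H ∧ p.1 ≠ w ∧ p.2 ≠ w := by
    by_cases hp : (shadowGraph H).Adj p.1 p.2
    · obtain ⟨w, hw⟩ := exists_third_of_shadowGraph_adj hH hp
      exact ⟨w, fun _ ↦ hw⟩
    · exact ⟨p.1, fun h ↦ absurd h hp⟩
  choose c hc using hthird
  let Γ : Finset (V × V) := {p | (shadowGraph H).Adj p.1 p.2}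
  have hcover : #(covPairs H) ≤ #Γ := by
    rw [card_covPairs]
    refine (card_le_card (t := Γ.image Sym2.mk.uncurry) fun e he ↦ ?_).trans card_image_le
    induction e with | _ u v
    exact mem_image.mpr ⟨(u, v), by simpa [Γ] using he, rfl⟩
  obtain ⟨f, hf⟩ := exists_card_le_card_mul_card_filter_comp_eq Γ (fun p ↦ ![p.1, p.2, c p])
    (fun p hp ↦ by
      have hp : (shadowGraph H).Adj p.1 p.2 := by simpa [Γ] using hp
      have := hp.ne
      have := hc p hp
      intro i j
      fin_cases i <;> fin_cases j <;> simp_all [eq_comm]) (id : Fin 3 → Fin 3)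
  have hcolor {p} (hp : p ∈ ({p ∈ Γ | f ∘ ![p.1, p.2, c p] = id} : Finset (V × V))) :
      {p.1, p.2, c p} ∈ H ∧ f p.1 = 0 ∧ f p.2 = 1 ∧ f (c p) = 2 := by
    obtain ⟨hp, hfp⟩ := mem_filter.mp hp
    exact ⟨(hc p (by simpa [Γ] using hp)).1, congrFun hfp 0, congrFun hfp 1, congrFun hfp 2⟩
  refine ⟨c, _, ⟨fun p hp ↦ (hcolor hp).1, ?_, ?_, ?_⟩, hcover.trans (by simpa using hf)⟩ <;>
  · intro p q hp hq heq
    have := hcolor hp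
    have := hcolor hq
    simp_all

end TripartiteCover

section Density

theorem card_sq_le_card_mul_sum_card_filter {ι κ : Type*} [Fintype κ] [DecidableEq κ]
    (s : Finset ι) (f : ι → κ) :
    #s ^ 2 ≤ Fintype.card κ * ∑ p ∈ s, #{q ∈ s | f q = f p} := by
  calc #s ^ 2 = (∑ b, #{q ∈ s | f q = b}) ^ 2 := by
        rw [← card_eq_sum_card_fiberwise fun _ _ ↦ by simp]
    _ ≤ Fintype.card κ * ∑ b, #{q ∈ s | f q = b} ^ 2 := sq_sum_le_card_mul_sum_sq
    _ = Fintype.card κ * ∑ p ∈ s, #{q ∈ s | f q = f p} := by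
        rw [← sum_fiberwise_of_maps_to (t := univ) (g := f) fun _ _ ↦ mem_univ _]
        congr! 2 with b
        rw [sum_congr rfl fun p hp ↦ by rw [(mem_filter.mp hp).2], sum_const, sq, smul_eq_mul]

variable {V : Type*} [DecidableEq V]

theorem card_sq_le_card_mul_sum_card_filter_mem [Fintype V] (Γ : Finset (V × V)) :
    #Γ ^ 2 ≤ Fintype.card V * ∑ x, #{p ∈ Γ | (x, p.2) ∈ Γ} := by
  refine (card_sq_le_card_mul_sum_card_filter Γ Prod.snd).trans_eq ?_
  have hfiber (p : V × V) : #{q ∈ Γ | q.2 = p.2} = #{x | (x, p.2) ∈ Γ} :=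
    card_nbij' Prod.fst (fun x ↦ (x, p.2)) (by grind [Set.MapsTo]) (by grind [Set.MapsTo])
      (by grind [Set.LeftInvOn]) (by grind [Set.LeftInvOn])
  simp only [hfiber, card_filter]
  rw [sum_comm]

theorem exists_notMem_le_card_filter [Fintype V] {Γ : Finset (V × V)} {F : Finset V} {γ : ℝ}
    (hγ : 0 ≤ γ) (hΓ : γ * Fintype.card V ^ 2 ≤ #Γ) (hF : 2 * #F < γ ^ 2 * Fintype.card V) :
    ∃ x ∉ F, γ ^ 2 / 2 * Fintype.card V ^ 2 ≤ #{p ∈ Γ | (x, p.2) ∈ Γ} := by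
  have hcard : (#Γ : ℝ) ^ 2 ≤ Fintype.card V * ∑ x, (#{p ∈ Γ | (x, p.2) ∈ Γ} : ℝ) :=
    mod_cast card_sq_le_card_mul_sum_card_filter_mem Γ
  by_contra! hfew
  set n : ℝ := (Fintype.card V : ℝ)
  have hn : 0 < n := pos_of_mul_pos_right (lt_of_le_of_lt (by positivity) hF) (sq_nonneg γ)
  have hterm (x : V) : (#{p ∈ Γ | (x, p.2) ∈ Γ} : ℝ) ≤
      (if x ∈ F then n ^ 2 else 0) + γ ^ 2 / 2 * n ^ 2 := by
    split_ifs with hx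
    · have htriv : (#{p ∈ Γ | (x, p.2) ∈ Γ} : ℝ) ≤ n ^ 2 := by
        simpa [n, sq] using Nat.cast_le (α := ℝ).mpr (card_le_univ {p ∈ Γ | (x, p.2) ∈ Γ})
      exact htriv.trans (le_add_of_nonneg_right (by positivity))
    · simpa using (hfew x hx).le
  have hsum : (#Γ : ℝ) ^ 2 ≤ n * (#F * n ^ 2 + n * (γ ^ 2 / 2 * n ^ 2)) :=
    calc (#Γ : ℝ) ^ 2 ≤ n * ∑ x, (#{p ∈ Γ | (x, p.2) ∈ Γ} : ℝ) := hcard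
      _ ≤ n * ∑ x, ((if x ∈ F then n ^ 2 else 0) + γ ^ 2 / 2 * n ^ 2) := by
          gcongr with x
          exact hterm x
      _ = n * (#F * n ^ 2 + n * (γ ^ 2 / 2 * n ^ 2)) := by simp [sum_add_distrib, n]
  have hsq : (γ * n ^ 2) ^ 2 ≤ (#Γ : ℝ) ^ 2 := by gcongr
  have hF' : n ^ 3 * (2 * #F) < n ^ 3 * (γ ^ 2 * n) := by gcongr
  linarith

theorem exists_card_eq_le_card_filter_forall_mem (t : ℕ) {γ : ℝ} (hγ : 0 < γ) :
    ∃ δ > 0, ∀ᶠ n : ℕ in atTop, ∀ Γ : Finset (Fin n × Fin n), γ * n ^ 2 ≤ #Γ →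
      ∃ X : Finset (Fin n), #X = t ∧ δ * n ^ 2 ≤ (#{p ∈ Γ | ∀ x ∈ X, (x, p.2) ∈ Γ} : ℝ) := by
  induction t with
  | zero => exact ⟨γ, hγ, .of_forall fun n Γ hΓ ↦ ⟨∅, rfl, by simpa using hΓ⟩⟩
  | succ t ih =>
    obtain ⟨δ, hδ, ih⟩ := ih
    have hlarge : ∀ᶠ n : ℕ in atTop, 2 * (t : ℝ) < δ ^ 2 * n :=
      (tendsto_natCast_atTop_atTop.const_mul_atTop (by positivity)).eventually_gt_atTop _
    refine ⟨δ ^ 2 / 2, by positivity, ?_⟩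
    filter_upwards [ih, hlarge] with n ih hlarge Γ hΓ
    obtain ⟨X, hX, hXΓ⟩ := ih Γ hΓ
    obtain ⟨x, hx, hxΓ⟩ := exists_notMem_le_card_filter (F := X) hδ.le (by simpa using hXΓ)
      (by simpa [hX] using hlarge)
    refine ⟨insert x X, by rw [card_insert_of_notMem hx, hX], ?_⟩
    rw [Fintype.card_fin] at hxΓ
    refine hxΓ.trans (Nat.cast_le.mpr (card_le_card fun p hp ↦ ?_))
    simp only [mem_filter, mem_insert, forall_eq_or_imp] at hp ⊢
    exact ⟨hp.1.1, hp.2.1, hp.1.2⟩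

theorem exists_forall_mem_le_card (t : ℕ) {γ : ℝ} (hγ : 0 < γ) :
    ∃ δ > 0, ∀ᶠ n : ℕ in atTop, ∀ Γ : Finset (Fin n × Fin n), γ * n ^ 2 ≤ #Γ →
      ∃ X Y : Finset (Fin n), #X = t ∧ #Y = t ∧ ∃ Γ' ⊆ Γ, δ * n ^ 2 ≤ (#Γ' : ℝ) ∧
        ∀ p ∈ Γ', ∀ x ∈ X, ∀ y ∈ Y, (x, p.2) ∈ Γ ∧ (p.1, y) ∈ Γ ∧ (x, y) ∈ Γ := by
  obtain ⟨δ₁, hδ₁, h₁⟩ := exists_card_eq_le_card_filter_forall_mem t hγ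
  obtain ⟨δ₂, hδ₂, h₂⟩ := exists_card_eq_le_card_filter_forall_mem t hδ₁
  refine ⟨δ₂, hδ₂, ?_⟩
  filter_upwards [h₁, h₂] with n h₁ h₂ Γ hΓ
  obtain ⟨X, hX, hXΓ⟩ := h₁ Γ hΓ
  set Γ₁ : Finset (Fin n × Fin n) := {p ∈ Γ | ∀ x ∈ X, (x, p.2) ∈ Γ}
  obtain ⟨Y, hY, hYΓ⟩ := h₂ (Γ₁.map (Equiv.prodComm _ _).toEmbedding) (by rwa [card_map])
  simp only [filter_map, card_map, mem_map_equiv] at hYΓ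
  refine ⟨X, Y, hX, hY, _, (filter_subset _ _).trans (filter_subset _ _), hYΓ,
    fun p hp x hx y hy ↦ ?_⟩
  obtain ⟨hp₁, hpY⟩ := mem_filter.mp hp
  obtain ⟨-, hpX⟩ := mem_filter.mp hp₁
  obtain ⟨hpy, hyX⟩ := mem_filter.mp (hpY y hy)
  exact ⟨hpX x hx, hpy, hyX x hx⟩

end Density

section Selection

theorem exists_subset_card_le_mul_card {ι κ β : Type*} [Finite β] [Nonempty β]
    {s : Finset ι} {f : ι → κ} {g : ι → β} {S : κ → Finset β} {k : ℕ}
    (hS : ∀ w, #(S w) ≤ k) (hg : ∀ p ∈ s, g p ∈ S (f p)) :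
    ∃ s' ⊆ s, #s ≤ k * #s' ∧ ∀ p ∈ s', ∀ q ∈ s', f p = f q → g p = g q := by
  classical
  choose b hb using fun w ↦ Finite.exists_max fun b ↦ #{p ∈ s | f p = w ∧ g p = b}
  refine ⟨{p ∈ s | g p = b (f p)}, filter_subset _ _, ?_, by grind⟩
  have hfiber (w) : #{p ∈ s | f p = w} ≤ k * #{p ∈ s | f p = w ∧ g p = b w} :=
    calc #{p ∈ s | f p = w} = ∑ a ∈ S w, #{p ∈ s | f p = w ∧ g p = a} := by
          rw [card_eq_sum_card_fiberwise (f := g) (t := S w) (by grind [Set.MapsTo])]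
          simp only [filter_filter]
      _ ≤ #(S w) * #{p ∈ s | f p = w ∧ g p = b w} :=
          sum_le_card_nsmul _ _ _ fun a _ ↦ hb w a
      _ ≤ k * #{p ∈ s | f p = w ∧ g p = b w} := by gcongr; exact hS w
  calc #s = ∑ w ∈ s.image f, #{p ∈ s | f p = w} :=
        card_eq_sum_card_image f s
    _ ≤ ∑ w ∈ s.image f, k * #{p ∈ s | f p = w ∧ g p = b w} := sum_le_sum fun w _ ↦ hfiber w
    _ = k * #{p ∈ s | g p = b (f p)} := by
        rw [← mul_sum, card_eq_sum_card_fiberwise (f := f) (s := {p ∈ s | g p = b (f p)})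
          (t := s.image f) (by grind [Set.MapsTo])]
        congr! 3 with w
        grind

theorem exists_subset_card_sq_le_and_eq_iff {ι κ β : Type*} [Fintype κ] [Nonempty κ]
    [DecidableEq β] {s : Finset ι} {f : ι → κ} {g : ι → β} {m : ℕ}
    (hfg : ∀ p ∈ s, ∀ q ∈ s, f p = f q → g p = g q) (hm : ∀ b, #{p ∈ s | g p = b} ≤ m) :
    ∃ s' ⊆ s, #s ^ 2 ≤ Fintype.card κ * (m * #s') ∧
      ∀ p ∈ s', ∀ q ∈ s', f p = f q ↔ g p = g q := by
  classical
  choose w hw using fun b ↦ Finite.exists_max fun w ↦ #{p ∈ s | g p = b ∧ f p = w}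
  refine ⟨{p ∈ s | f p = w (g p)}, filter_subset _ _, ?_, by grind⟩
  have hfiber : ∀ p ∈ s, #{q ∈ s | f q = f p} ≤ #{q ∈ {q ∈ s | f q = w (g q)} | g q = g p} :=
    fun p hp ↦
      calc #{q ∈ s | f q = f p} = #{q ∈ s | g q = g p ∧ f q = f p} := by congr 1; grind
        _ ≤ #{q ∈ s | g q = g p ∧ f q = w (g p)} := hw (g p) (f p)
        _ = #{q ∈ {q ∈ s | f q = w (g q)} | g q = g p} := by congr 1; grind
  calc #s ^ 2 ≤ Fintype.card κ * ∑ p ∈ s, #{q ∈ s | f q = f p} :=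
        card_sq_le_card_mul_sum_card_filter s f
    _ ≤ Fintype.card κ * ∑ p ∈ s, #{q ∈ {q ∈ s | f q = w (g q)} | g q = g p} :=
        Nat.mul_le_mul_left _ (sum_le_sum hfiber)
    _ = Fintype.card κ * ∑ q ∈ s with f q = w (g q), #{p ∈ s | g q = g p} := by
        simp only [card_filter]
        rw [sum_comm]
    _ ≤ Fintype.card κ * (m * #{p ∈ s | f p = w (g p)}) := by
        gcongr
        rw [mul_comm]
        exact sum_le_card_nsmul _ _ _ fun q _ ↦ by simpa only [eq_comm] using hm (g q)

theorem exists_injOn_or_exists_cover {V W : Type*} (P : Finset (V × W)) (k : ℕ) :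
    (∃ M ⊆ P, #M = k ∧ Set.InjOn Prod.fst (M : Set (V × W)) ∧
      Set.InjOn Prod.snd (M : Set (V × W))) ∨
    ∃ (S : Finset V) (T : Finset W), #S ≤ k ∧ #T ≤ k ∧ ∀ p ∈ P, p.1 ∈ S ∨ p.2 ∈ T := by
  classical
  induction k with
  | zero => exact .inl ⟨∅, by simp⟩
  | succ k ih =>
    obtain ⟨M, hMP, hM, hfst, hsnd⟩ | ⟨S, T, hS, hT, hST⟩ := ih
    · by_cases hcover : ∀ p ∈ P, p.1 ∈ M.image Prod.fst ∨ p.2 ∈ M.image Prod.snd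
      · exact .inr ⟨_, _, card_image_le.trans (by lia), card_image_le.trans (by lia), hcover⟩
      · push Not at hcover
        obtain ⟨p, hp, hp₁, hp₂⟩ := hcover
        have hpM : p ∉ M := fun h ↦ hp₁ (mem_image_of_mem _ h)
        refine .inl ⟨insert p M, insert_subset hp hMP, by rw [card_insert_of_notMem hpM, hM], ?_⟩
        rw [coe_insert, Set.injOn_insert (mod_cast hpM), Set.injOn_insert (mod_cast hpM)]
        exact ⟨⟨hfst, by simpa using hp₁⟩, hsnd, by simpa using hp₂⟩
    · exact .inr ⟨S, T, by lia, by lia, hST⟩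

end Selection

section Matching

theorem exists_embedding_extending {α V : Type*} [Fintype α] {m : α → V} (hm : Injective m)
    (N : α → Prop) {X : Finset V} (hX : 2 * Fintype.card α ≤ #X) :
    ∃ a : α ↪ V, (∀ x, N x → a x = m x) ∧ ∀ x, ¬N x → a x ∈ X := by
  classical
  have hcard : Fintype.card α ≤ #(X \ univ.image m) := by
    have := le_card_sdiff (univ.image m) X
    rw [card_image_of_injective _ hm, card_univ] at this
    lia
  obtain ⟨f, hf⟩ := Embedding.exists_of_card_le_finset hcard
  have hmem (x) : f x ∈ X \ univ.image m := hf ⟨x, rfl⟩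
  have hne (x y) : m x ≠ f y := fun hxy ↦
    (mem_sdiff.mp (hmem y)).2 (mem_image.mpr ⟨x, mem_univ x, hxy⟩)
  have hinj : Injective fun x ↦ if N x then m x else f x := by
    have := f.injective
    grind [Injective]
  refine ⟨⟨_, hinj⟩, fun x hx ↦ if_pos hx, fun x hx ↦ ?_⟩
  simpa [hx] using (mem_sdiff.mp (hmem x)).1

variable {α V : Type*} {G : SimpleGraph α}

theorem exists_bool_ne_of_colorable_induce_compl {v : α}
    (hv : (G.induce ({v}ᶜ : Set α)).Colorable 2) :
    ∃ κ : α → Bool, ∀ x y, G.Adj x y → x ≠ v → y ≠ v → κ x ≠ κ y := by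
  let C : (G.induce ({v}ᶜ : Set α)).Coloring Bool := hv.toColoring (by simp)
  refine ⟨extend Subtype.val C fun _ ↦ false, fun x y hxy hx hy ↦ ?_⟩
  rw [Subtype.val_injective.extend_apply C _ ⟨x, hx⟩,
    Subtype.val_injective.extend_apply C _ ⟨y, hy⟩]
  exact C.valid hxy

variable [DecidableEq V] {H : Finset (Finset V)} {c : V × V → V} {Γ M : Finset (V × V)}

theorem IsTripartiteCover.hasBergeCopy_of_matching [Fintype α] (h : IsTripartiteCover H c Γ)
    (hG : G.CliqueFree 3) {v : α} (hv : (G.induce ({v}ᶜ : Set α)).Colorable 2) {X Y : Finset V}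
    (hX : 2 * Fintype.card α ≤ #X) (hY : 2 * Fintype.card α ≤ #Y) (hM : Fintype.card α ≤ #M)
    (hfst : Set.InjOn Prod.fst (M : Set (V × V))) (hsnd : Set.InjOn Prod.snd (M : Set (V × V)))
    (hMΓ : M ⊆ Γ) {w : V} (hMw : ∀ p ∈ M, c p = w)
    (hΓ : ∀ p ∈ M, ∀ x ∈ X, ∀ y ∈ Y, (x, p.2) ∈ Γ ∧ (p.1, y) ∈ Γ ∧ (x, y) ∈ Γ) :
    HasBergeCopy G H := by
  classical
  obtain ⟨κ, hκ⟩ := exists_bool_ne_of_colorable_induce_compl hv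
  obtain ⟨m, hm⟩ := Embedding.exists_of_card_le_finset hM
  have hm (x) : m x ∈ M := hm ⟨x, rfl⟩
  obtain ⟨a, ham, haX⟩ := exists_embedding_extending
    (m := fun x ↦ (m x).1) (fun x y hxy ↦ m.injective (hfst (hm x) (hm y) hxy)) (G.Adj v) hX
  obtain ⟨b, hbm, hbY⟩ := exists_embedding_extending
    (m := fun x ↦ (m x).2) (fun x y hxy ↦ m.injective (hsnd (hm x) (hm y) hxy)) (G.Adj v) hY
  have hab_same (x) : (a x, b x) ∈ Γ := by
    by_cases hx : G.Adj v x
    · simpa [ham x hx, hbm x hx] using hMΓ (hm x)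
    · exact (hΓ _ (hm v) _ (haX x hx) _ (hbY x hx)).2.2
  refine h.hasBergeCopy_of_apex hκ a b (fun x ↦ mem_image_of_mem _ (hab_same x))
    (fun x ↦ mem_image_of_mem _ (hab_same x)) (mem_image.mpr ⟨m v, hMΓ (hm v), hMw _ (hm v)⟩)
    (fun x hx ↦ ⟨hab_same x, ?_⟩) fun x y hxy ↦ ?_
  · simpa [ham x hx, hbm x hx] using hMw _ (hm x)
  · by_cases hx : G.Adj v x
    · have hy : ¬G.Adj v y := fun hy ↦ hG _ (SimpleGraph.is3Clique_triple_iff.mpr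
        ⟨hx, hy, hxy⟩)
      simpa [ham x hx] using (hΓ _ (hm x) _ (haX v (G.irrefl)) _ (hbY y hy)).2.1
    · by_cases hy : G.Adj v y
      · simpa [hbm y hy] using (hΓ _ (hm y) _ (haX x hx) _ (hbY v G.irrefl)).1
      · exact (hΓ _ (hm v) _ (haX x hx) _ (hbY y hy)).2.2

end Matching

section Degenerate

theorem exists_subset_third_eq_iff {V : Type*} [Fintype V] [Nonempty V]
    {c : V × V → V} {Γ : Finset (V × V)} {S : V → Finset V} {k : ℕ} (hS : ∀ w, #(S w) ≤ k)
    (hΓ : ∀ p ∈ Γ, p.1 ∈ S (c p)) :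
    ∃ Γ' ⊆ Γ, #Γ ^ 2 ≤ k ^ 2 * (Fintype.card V ^ 2 * #Γ') ∧
      ∀ p ∈ Γ', ∀ q ∈ Γ', c p = c q ↔ p.1 = q.1 := by
  classical
  obtain ⟨Γ₁, hΓ₁, hcard₁, heq⟩ := exists_subset_card_le_mul_card hS hΓ
  have hfiber (u : V) : #{p ∈ Γ₁ | p.1 = u} ≤ Fintype.card V :=
    card_le_card_of_injOn Prod.snd (by simp) (by grind [Set.InjOn])
  obtain ⟨Γ₂, hΓ₂, hcard₂, hiff⟩ := exists_subset_card_sq_le_and_eq_iff heq hfiber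
  refine ⟨Γ₂, hΓ₂.trans hΓ₁, ?_, hiff⟩
  calc #Γ ^ 2 ≤ (k * #Γ₁) ^ 2 := by gcongr
    _ = k ^ 2 * #Γ₁ ^ 2 := mul_pow ..
    _ ≤ k ^ 2 * (Fintype.card V * (Fintype.card V * #Γ₂)) := by gcongr
    _ = k ^ 2 * (Fintype.card V ^ 2 * #Γ₂) := by ring

theorem eventually_exists_embedding_pairedHypergraph (A B : Type*) [Fintype A] [Fintype B]
    [DecidableEq A] [DecidableEq B] [Nonempty B] {k : ℕ} (hk : 0 < k) {γ : ℝ} (hγ : 0 < γ) :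
    ∀ᶠ n : ℕ in atTop, ∀ (H : Finset (Finset (Fin n))) (c : Fin n × Fin n → Fin n)
      (Γ : Finset (Fin n × Fin n)) (S : Fin n → Finset (Fin n)), IsTripartiteCover H c Γ →
      γ * n ^ 2 ≤ #Γ → (∀ w, #(S w) ≤ k) → (∀ p ∈ Γ, p.1 ∈ S (c p)) →
      ∃ j : (A × Bool) ⊕ B ↪ Fin n, ∀ e ∈ pairedHypergraph A B, e.map j ∈ H := by
  obtain ⟨δ, hδ, hcore⟩ := exists_forall_mem_le_card (max (Fintype.card A) (Fintype.card B))
    (γ := (γ / k) ^ 2) (by positivity)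
  filter_upwards [hcore, eventually_gt_atTop 0] with n hcore hn H c Γ S h hΓ hS hΓS
  have : Nonempty (Fin n) := ⟨0, hn⟩
  obtain ⟨Γ₁, hΓ₁, hcard, hiff⟩ := exists_subset_third_eq_iff hS hΓS
  have hdense : (γ / k) ^ 2 * n ^ 2 ≤ #Γ₁ := by
    have hcard : (#Γ : ℝ) ^ 2 ≤ k ^ 2 * (n ^ 2 * #Γ₁) := by
      exact_mod_cast Fintype.card_fin n ▸ hcard
    have hsq : (γ * n ^ 2) ^ 2 ≤ (#Γ : ℝ) ^ 2 := by gcongr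
    rw [div_pow, div_mul_eq_mul_div, div_le_iff₀ (by positivity)]
    refine le_of_mul_le_mul_left ?_ (by positivity : 0 < (n : ℝ) ^ 2)
    linarith
  obtain ⟨X, Y, hX, hY, Γ₂, -, hcard₂, hXY⟩ := hcore Γ₁ hdense
  obtain ⟨p, hp⟩ : Γ₂.Nonempty :=
    card_pos.mp (Nat.cast_pos.mp (lt_of_lt_of_le (by positivity) hcard₂))
  obtain ⟨a, ha⟩ := Embedding.exists_of_card_le_finset ((le_max_left _ _).trans_eq hX.symm)
  obtain ⟨b, hb⟩ := Embedding.exists_of_card_le_finset ((le_max_right _ _).trans_eq hY.symm)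
  exact (h.mono hΓ₁).exists_embedding_of_third_eq_iff hiff a b
    fun x y ↦ (hXY p hp _ (ha ⟨x, rfl⟩) _ (hb ⟨y, rfl⟩)).2.2

end Degenerate

section DegenerateUpper

variable {α : Type*} [Finite α] {G : SimpleGraph α} {γ : ℝ}

theorem eventually_hasBergeCopy_of_cover (hG : G.CliqueFree 3) {U : Set α}
    (hU : IsMatchingSide G U) {k : ℕ} (hk : 0 < k) (hγ : 0 < γ) :
    ∀ᶠ n : ℕ in atTop, ∀ (H : Finset (Finset (Fin n))) (c : Fin n × Fin n → Fin n)
      (Γ : Finset (Fin n × Fin n)) (S T : Fin n → Finset (Fin n)), IsTripartiteCover H c Γ →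
      γ * n ^ 2 ≤ #Γ → (∀ w, #(S w) ≤ k) → (∀ w, #(T w) ≤ k) →
      (∀ p ∈ Γ, p.1 ∈ S (c p) ∨ p.2 ∈ T (c p)) → HasBergeCopy G H := by
  classical
  cases nonempty_fintype α
  filter_upwards [eventually_exists_embedding_pairedHypergraph α (Option α) hk (half_pos hγ)]
    with n hembed H c Γ S T h hΓ hS hT hcover
  suffices hj : ∃ j : (α × Bool) ⊕ Option α ↪ Fin n, ∀ e ∈ pairedHypergraph α (Option α),
      e.map j ∈ H by
    obtain ⟨j, hj⟩ := hj
    exact (hasBergeCopy_pairedHypergraph hG hU).map j hj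
  let ΓS : Finset (Fin n × Fin n) := {p ∈ Γ | p.1 ∈ S (c p)}
  let ΓT : Finset (Fin n × Fin n) := {p ∈ Γ | p.2 ∈ T (c p)}
  have hcard : (#Γ : ℝ) ≤ #ΓS + #ΓT := by
    rw [← filter_true_of_mem hcover, filter_or]
    exact_mod_cast card_union_le _ _
  by_cases hΓS : γ / 2 * n ^ 2 ≤ #ΓS
  · exact hembed H c ΓS S (h.mono (filter_subset _ _)) hΓS hS fun p hp ↦ (mem_filter.mp hp).2
  · refine hembed H _ _ T (h.mono (filter_subset _ _) : IsTripartiteCover H c ΓT).swap ?_ hT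
      fun p hp ↦ (mem_filter.mp (mem_map_equiv.mp hp)).2
    rw [card_map]
    linarith

theorem eventually_hasBergeCopy_of_isTripartiteCover (hG : G.CliqueFree 3) {v : α}
    (hv : (G.induce ({v}ᶜ : Set α)).Colorable 2) {U : Set α} (hU : IsMatchingSide G U)
    (hγ : 0 < γ) :
    ∀ᶠ n : ℕ in atTop, ∀ (H : Finset (Finset (Fin n))) (c : Fin n × Fin n → Fin n)
      (Γ : Finset (Fin n × Fin n)), IsTripartiteCover H c Γ → γ * n ^ 2 ≤ #Γ →
      HasBergeCopy G H := by
  cases nonempty_fintype α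
  have hk : 0 < Fintype.card α := Fintype.card_pos_iff.mpr ⟨v⟩
  obtain ⟨δ, hδ, hcore⟩ := exists_forall_mem_le_card (2 * Fintype.card α) hγ
  filter_upwards [hcore, eventually_hasBergeCopy_of_cover hG hU hk hδ]
    with n hcore hcover H c Γ h hΓ
  obtain ⟨X, Y, hX, hY, Γ', hΓ', hdense, hXY⟩ := hcore Γ hΓ
  by_cases hmatching : ∃ w, ∃ M ⊆ ({p ∈ Γ' | c p = w} : Finset (Fin n × Fin n)),
      #M = Fintype.card α ∧ Set.InjOn Prod.fst (M : Set (Fin n × Fin n)) ∧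
        Set.InjOn Prod.snd (M : Set (Fin n × Fin n))
  · obtain ⟨w, M, hM, hcard, hfst, hsnd⟩ := hmatching
    have hMΓ' : M ⊆ Γ' := hM.trans (filter_subset _ _)
    exact h.hasBergeCopy_of_matching hG hv hX.ge hY.ge hcard.ge hfst hsnd (hMΓ'.trans hΓ')
      (fun p hp ↦ (mem_filter.mp (hM hp)).2) fun p hp ↦ hXY p (hMΓ' hp)
  · have hST w := (exists_injOn_or_exists_cover {p ∈ Γ' | c p = w} (Fintype.card α)).resolve_left
      fun hM ↦ hmatching ⟨w, hM⟩
    choose S T hS hT hST using hST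
    exact hcover H c Γ' S T (h.mono hΓ') hdense hS hT
      fun p hp ↦ hST (c p) p (mem_filter.mpr ⟨hp, rfl⟩)

theorem coverTuranDensity_three_le_zero (hG : G.CliqueFree 3) {v : α}
    (hv : (G.induce ({v}ᶜ : Set α)).Colorable 2) {U : Set α} (hU : IsMatchingSide G U) :
    coverTuranDensity 3 G ≤ 0 := by
  refine coverTuranDensity_le le_rfl fun ε hε ↦ ?_
  filter_upwards [eventually_hasBergeCopy_of_isTripartiteCover hG hv hU
    (γ := ε / 108) (by positivity), eventually_ge_atTop 2] with n hn hn₂ H hH hdense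
  obtain ⟨c, Γ, h, hcard⟩ := exists_isTripartiteCover hH
  refine hn H c Γ h ?_
  rify at hn₂ hcard
  rw [Nat.cast_choose_two] at hdense
  nlinarith [mul_nonneg hε.le (mul_nonneg (sub_nonneg.mpr hn₂) n.cast_nonneg)]

end DegenerateUpper

theorem half_le_coverTuranDensity_of_not_degenerateCond {α : Type*} [Nonempty α]
    {G : SimpleGraph α} (hG : ¬DegenerateCond G) : 1 / 2 ≤ coverTuranDensity 3 G := by
  rw [degenerateCond_iff] at hG
  by_cases hv : ∃ v : α, (G.induce ({v}ᶜ : Set α)).Colorable 2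
  · exact half_le_coverTuranDensity_of_not_isMatchingSide fun h ↦ hG ⟨⟨h.1, hv⟩, h.2⟩
  · exact half_le_coverTuranDensity_of_not_colorable_induce hv

theorem stmt8 {α : Type*} [Fintype α] (G : SimpleGraph α)
    (hE : G.edgeSet.Nonempty) (χ : ℕ) (hχ : G.chromaticNumber = (χ : ℕ∞)) :
    (4 ≤ χ → coverTuranDensity 3 G = 1 - 1 / ((χ : ℝ) - 1)) ∧
    (DegenerateCond G → coverTuranDensity 3 G = 0) ∧
    (χ < 4 → ¬ DegenerateCond G → coverTuranDensity 3 G = 1 / 2) := by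
  have hcol : G.Colorable χ := SimpleGraph.chromaticNumber_le_iff_colorable.mp hχ.le
  refine ⟨fun hχ₄ ↦ ?_, fun hdeg ↦ ?_, fun hχ₄ hdeg ↦ ?_⟩
  · obtain ⟨r, rfl⟩ := Nat.exists_eq_add_one.mpr (show 0 < χ by lia)
    have hncol : ¬G.Colorable r := fun h ↦
      absurd (hχ ▸ SimpleGraph.chromaticNumber_le_iff_colorable.mpr h) (by norm_cast; lia)
    simpa using (coverTuranDensity_le_of_colorable 3 (by lia) hcol).antisymm
      (le_coverTuranDensity_of_not_colorable (by lia) (by lia) hncol)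
  · obtain ⟨⟨hG, v, hv⟩, U, hU⟩ := degenerateCond_iff.mp hdeg
    exact (coverTuranDensity_three_le_zero hG hv hU).antisymm (coverTuranDensity_nonneg 3 G)
  · have : Nonempty α := hE.elim fun e _ ↦ ⟨e.out.1⟩
    have hupper : coverTuranDensity 3 G ≤ 1 - 1 / (2 : ℕ) :=
      coverTuranDensity_le_of_colorable 3 one_le_two (hcol.mono (Nat.le_of_lt_succ hχ₄))
    exact (hupper.trans_eq (by norm_num)).antisymm
      (half_le_coverTuranDensity_of_not_degenerateCond hdeg)
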